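/- Let Ω ⊆ Q be a closed axis-parallel cube with positive volume. Then for all sufficiently large n, for every minimizer Y_n of the quantization energy among subsets of Q with n points, the total energy contribution of the Voronoi cells intersecting ∂Ω satisfies Σ_{y ∈ Y_n, V_y ∩ ∂Ω ≠ ∅} ∫_{V_y} |x − y|² dx ≤ (3Γ₄⁶/(4Γ₅³))·n^{−1}, where Γ₄ := (2·12^{1/4}·16^{1/3}/(π^{1/4}·ω₃^{1/12}))·(√(1 + 2⁴·3³/(5²·10³)) − 1)^{−1/2}·(5²·10³/(2²·3³))^{1/4}, Γ₅ := (1/4)·(√(1 + 2⁴·3³/(5²·10³)) − 1)·Γ₃, Γ₃ := ω₃^{−1/5}·Γ₁^{1/5}, Γ₁ := (2/5)^{2/3}/40. -/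

import Mathlib

open MeasureTheory

noncomputable section

/-- Euclidean 3-space. -/
abbrev E3 := EuclideanSpace ℝ (Fin 3)

/-- The closed unit cube Q = [0,1]³. -/
def Qcube : Set E3 := {x | ∀ i, x i ∈ Set.Icc (0 : ℝ) 1}

/-- The quantization energy E(Y) = ∫_Q dist(x,Y)² dx. -/
def quantE (Y : Finset E3) : ℝ := ∫ x in Qcube, (Metric.infDist x (↑Y : Set E3)) ^ 2

/-- The Voronoi cell of a generator y ∈ Y, relative to Q. -/
def vorCell (Y : Finset E3) (y : E3) : Set E3 :=
  {x ∈ Qcube | ∀ z ∈ Y, dist x y ≤ dist x z}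

/-- Y is a minimizer of the quantization energy among n-point subsets of Q. -/
def IsMinimizer (n : ℕ) (Y : Finset E3) : Prop :=
  (↑Y : Set E3) ⊆ Qcube ∧ Y.card = n ∧
    ∀ Z : Finset E3, (↑Z : Set E3) ⊆ Qcube → Z.card = n → quantE Y ≤ quantE Z

/-- ω₃ = 4π/3, the volume of the unit ball in ℝ³. -/
def omega3 : ℝ := 4 * Real.pi / 3

/-- Γ₁ = (2/5)^{2/3} / 40. -/
def Gamma1 : ℝ := ((2 / 5 : ℝ) ^ ((2 : ℝ) / 3)) / 40

/-- Γ₃ = ω₃^{-1/5} Γ₁^{1/5}. -/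
def Gamma3 : ℝ := omega3 ^ (-(1 : ℝ) / 5) * Gamma1 ^ ((1 : ℝ) / 5)

/-- Γ₅ = (1/4)(√(1 + 2⁴·3³/(5²·10³)) − 1) Γ₃. -/
def Gamma5 : ℝ :=
  (1 / 4) * (Real.sqrt (1 + (2 ^ 4 * 3 ^ 3 : ℝ) / (5 ^ 2 * 10 ^ 3)) - 1) * Gamma3

/-- Γ₄, the diameter upper-bound constant. -/
def Gamma4 : ℝ :=
  (2 * (12 : ℝ) ^ ((1 : ℝ) / 4) * (16 : ℝ) ^ ((1 : ℝ) / 3) /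
      (Real.pi ^ ((1 : ℝ) / 4) * omega3 ^ ((1 : ℝ) / 12))) *
    (Real.sqrt (1 + (2 ^ 4 * 3 ^ 3 : ℝ) / (5 ^ 2 * 10 ^ 3)) - 1) ^ (-(1 : ℝ) / 2) *
    ((5 ^ 2 * 10 ^ 3 : ℝ) / (2 ^ 2 * 3 ^ 3)) ^ ((1 : ℝ) / 4)

/-! An optimal quantizer `Y` has covering radius `O(n ^ (-1 / d))`: split the cube into about
`n / 2` congruent cells. By the pigeonhole principle some cell contains two sites `y`, `z` such that
the Voronoi cell of `y` carries at most an average share of the energy, so deleting `y` costs only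
`O(n ^ (-(d + 2) / d))`, as its points can use `z` instead. Inserting a new site at a point at
distance `R` from `Y` gains at least a multiple of `R ^ (d + 2)`, and optimality forces
`R = O(n ^ (-1 / d))`.

Every Voronoi cell meeting the boundary of a box then lies within `2R` of one of its facet
hyperplanes, so these cells have total volume `O(R)` and total energy `O(R³)`. In dimension three
this is `O(1 / n)`, and the crude constant obtained is already below the one required. -/

open Metric

section Combinatorics

open Finset in
lemma exists_ne_map_eq_and_mul_le {α : Type*} {s : Finset α} {N : ℕ} (hN : 0 < N)
    (hs : 2 * N ≤ #s) (label : α → Fin N) {f : α → ℝ} (hf : ∀ a ∈ s, 0 ≤ f a) {T : ℝ}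
    (hT : ∑ a ∈ s, f a ≤ T) :
    ∃ a ∈ s, ∃ b ∈ s, b ≠ a ∧ label a = label b ∧ N * f a ≤ T := by
  have hT0 : 0 ≤ T := (sum_nonneg hf).trans hT
  have card_expensive : #{a ∈ s | ¬ N * f a ≤ T} < N := by
    by_contra hcon
    have hle := not_lt.1 hcon
    have nonempty : ({a ∈ s | ¬ N * f a ≤ T} : Finset α).Nonempty :=
      card_pos.1 (hN.trans_le hle)
    have : N * T < N * T := calc
      N * T ≤ #{a ∈ s | ¬ N * f a ≤ T} * T := by gcongr
      _ = ∑ a ∈ s with ¬ N * f a ≤ T, T := by rw [sum_const, nsmul_eq_mul]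
      _ < ∑ a ∈ s with ¬ N * f a ≤ T, N * f a :=
        sum_lt_sum_of_nonempty nonempty fun a ha => not_le.1 (mem_filter.1 ha).2
      _ ≤ ∑ a ∈ s, N * f a :=
        sum_le_sum_of_subset_of_nonneg (filter_subset _ _) fun a ha _ =>
          mul_nonneg N.cast_nonneg (hf a ha)
      _ ≤ N * T := by rw [← mul_sum]; gcongr
    exact this.false
  have card_cheap : #(univ : Finset (Fin N)) < #{a ∈ s | N * f a ≤ T} := by
    have := card_filter_add_card_filter_not (s := s) (fun a => N * f a ≤ T)
    rw [card_univ, Fintype.card_fin]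
    omega
  obtain ⟨a, ha, b, hb, hab, heq⟩ :=
    exists_ne_map_eq_of_card_lt_of_maps_to card_cheap fun a _ => mem_univ (label a)
  exact ⟨a, (mem_filter.1 ha).1, b, (mem_filter.1 hb).1, hab.symm, heq, (mem_filter.1 ha).2⟩

lemma exists_finset_superset_card_eq {α : Type*} {K : Set α} (hK : K.Infinite) {G : Finset α}
    (hG : (G : Set α) ⊆ K) {n : ℕ} (hn : G.card ≤ n) :
    ∃ Z : Finset α, G ⊆ Z ∧ (Z : Set α) ⊆ K ∧ Z.card = n := by
  classical
  obtain ⟨Z, hZ, hcard⟩ := (hK.sdiff G.finite_toSet).exists_subset_card_eq (n - G.card)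
  have disjoint : Disjoint G Z :=
    Finset.disjoint_left.2 fun a haG haZ => (hZ haZ).2 haG
  refine ⟨G ∪ Z, Finset.subset_union_left, ?_, ?_⟩
  · rw [Finset.coe_union]
    exact Set.union_subset hG (hZ.trans Set.sdiff_subset)
  · rw [Finset.card_union_of_disjoint disjoint, hcard, Nat.add_sub_cancel' hn]

lemma exists_two_mul_pow_le_and_le {d n : ℕ} (hd : d ≠ 0) (hn : 2 ≤ n) :
    ∃ m : ℕ, 0 < m ∧ 2 * m ^ d ≤ n ∧ n ≤ 2 * (2 * m) ^ d := by
  set m := Nat.nthRoot d (n / 2)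
  have pow_le : m ^ d ≤ n / 2 := Nat.pow_nthRoot_le_iff.2 (.inl hd)
  have lt_pow : n / 2 < (m + 1) ^ d := Nat.lt_pow_nthRoot_add_one hd _
  have hm : 0 < m := by
    by_contra! h
    rw [Nat.le_zero.1 h, zero_add, one_pow] at lt_pow
    omega
  have : (m + 1) ^ d ≤ (2 * m) ^ d := Nat.pow_le_pow_left (by omega) d
  exact ⟨m, hm, by omega, by omega⟩

end Combinatorics

section Voronoi

variable {E : Type*} [PseudoMetricSpace E] {K B : Set E} {Y : Finset E} {x y z p : E} {r : ℝ}

/-- The Voronoi cell of `y` relative to the sites `Y`, inside the region `K`. -/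
def voronoiCell (K : Set E) (Y : Finset E) (y : E) : Set E :=
  {x ∈ K | ∀ z ∈ Y, dist x y ≤ dist x z}

lemma voronoiCell_subset (K : Set E) (Y : Finset E) (y : E) : voronoiCell K Y y ⊆ K :=
  Set.sep_subset _ _

lemma isClosed_voronoiCell (hK : IsClosed K) (Y : Finset E) (y : E) :
    IsClosed (voronoiCell K Y y) := by
  simp only [voronoiCell, Set.ofPred_and, Set.ofPred_forall]
  exact hK.inter <| isClosed_biInter fun z _ => isClosed_le (by fun_prop) (by fun_prop)

lemma dist_eq_infDist_of_mem_voronoiCell (hy : y ∈ Y) (hx : x ∈ voronoiCell K Y y) :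
    dist x y = infDist x Y :=
  le_antisymm ((le_infDist ⟨y, hy⟩).2 fun {z} hz => hx.2 z hz) (infDist_le_dist_of_mem hy)

lemma exists_ne_infDist_eq_dist_of_notMem_voronoiCell (hy : y ∈ Y) (hxK : x ∈ K)
    (hx : x ∉ voronoiCell K Y y) : ∃ w ∈ Y, w ≠ y ∧ infDist x Y = dist x w := by
  obtain ⟨w, hwY, hw⟩ := Y.finite_toSet.isCompact.exists_infDist_eq_dist ⟨y, hy⟩ x
  refine ⟨w, hwY, ?_, hw⟩
  rintro rfl
  exact hx ⟨hxK, fun z hz => hw ▸ infDist_le_dist_of_mem hz⟩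

open scoped Classical in
lemma infDist_insert_erase_sq_add_le (hx : dist x p ≤ infDist p Y / 4) :
    infDist x ↑(insert p (Y.erase y)) ^ 2 + infDist p Y ^ 2 / 2 ≤ infDist x Y ^ 2 := by
  have near_p : infDist x ↑(insert p (Y.erase y)) ≤ infDist p Y / 4 :=
    (infDist_le_dist_of_mem (by simp)).trans hx
  have far_from_sites : 3 * infDist p Y / 4 ≤ infDist x Y := by
    have : infDist p Y ≤ infDist x Y + dist p x := infDist_le_infDist_add_dist
    linarith [dist_comm x p]
  have : 0 ≤ infDist p Y := infDist_nonneg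
  calc infDist x ↑(insert p (Y.erase y)) ^ 2 + infDist p Y ^ 2 / 2
      ≤ (infDist p Y / 4) ^ 2 + infDist p Y ^ 2 / 2 := by
        gcongr
        exact infDist_nonneg
    _ = (3 * infDist p Y / 4) ^ 2 := by ring
    _ ≤ infDist x Y ^ 2 := by gcongr

open scoped Classical in
lemma infDist_insert_erase_sq_le_of_mem_voronoiCell (hy : y ∈ Y) (hz : z ∈ Y) (hzy : z ≠ y)
    (hyz : dist y z ≤ r) (hx : x ∈ voronoiCell K Y y) :
    infDist x ↑(insert p (Y.erase y)) ^ 2 ≤ 2 * infDist x Y ^ 2 + 2 * r ^ 2 := by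
  rw [← dist_eq_infDist_of_mem_voronoiCell hy hx]
  have le_add : infDist x ↑(insert p (Y.erase y)) ≤ dist x y + r :=
    (infDist_le_dist_of_mem (by simp [hz, hzy])).trans <|
      (dist_triangle x y z).trans (by gcongr)
  calc infDist x ↑(insert p (Y.erase y)) ^ 2 ≤ (dist x y + r) ^ 2 :=
        pow_le_pow_left₀ infDist_nonneg le_add 2
    _ ≤ 2 * (dist x y ^ 2 + r ^ 2) := add_sq_le
    _ = _ := mul_add _ _ _

open scoped Classical in
lemma infDist_insert_erase_le_of_notMem_voronoiCell (hy : y ∈ Y) (hxK : x ∈ K)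
    (hx : x ∉ voronoiCell K Y y) : infDist x ↑(insert p (Y.erase y)) ≤ infDist x Y := by
  obtain ⟨w, hwY, hwy, hw⟩ := exists_ne_infDist_eq_dist_of_notMem_voronoiCell hy hxK hx
  rw [hw]
  exact infDist_le_dist_of_mem (by simp [hwY, hwy])

open scoped Classical in
lemma infDist_insert_erase_sq_add_indicator_le (hy : y ∈ Y) (hz : z ∈ Y) (hzy : z ≠ y)
    (hyz : dist y z ≤ r) (hB : B ⊆ closedBall p (infDist p Y / 4)) (hx : x ∈ K) :
    infDist x ↑(insert p (Y.erase y)) ^ 2 + B.indicator (fun _ => infDist p Y ^ 2 / 2) x ≤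
      infDist x Y ^ 2 +
        (voronoiCell K Y y).indicator (fun x => infDist x Y ^ 2 + 2 * r ^ 2) x := by
  have indicator_nonneg :
      0 ≤ (voronoiCell K Y y).indicator (fun x => infDist x Y ^ 2 + 2 * r ^ 2) x :=
    Set.indicator_nonneg (fun x _ => by positivity) x
  by_cases hxB : x ∈ B
  · rw [Set.indicator_of_mem hxB]
    exact (infDist_insert_erase_sq_add_le (hB hxB)).trans (le_add_of_nonneg_right indicator_nonneg)
  rw [Set.indicator_of_notMem hxB, add_zero]
  by_cases hxV : x ∈ voronoiCell K Y y
  · rw [Set.indicator_of_mem hxV]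
    linarith [infDist_insert_erase_sq_le_of_mem_voronoiCell (p := p) hy hz hzy hyz hxV]
  · rw [Set.indicator_of_notMem hxV, add_zero]
    exact pow_le_pow_left₀ infDist_nonneg
      (infDist_insert_erase_le_of_notMem_voronoiCell hy hx hxV) 2

end Voronoi

section VoronoiMeasure

variable {E : Type*} [NormedAddCommGroup E] [InnerProductSpace ℝ E] [FiniteDimensional ℝ E]
  [MeasurableSpace E] [BorelSpace E] {μ : Measure E} [μ.IsAddHaarMeasure]
  {K T : Set E} {Y S : Finset E} {y z : E} {g : E → ℝ}

lemma aedisjoint_voronoiCell (hy : y ∈ Y) (hz : z ∈ Y) (hyz : y ≠ z) :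
    AEDisjoint μ (voronoiCell K Y y) (voronoiCell K Y z) := by
  have bisector_null : μ (AffineSubspace.perpBisector y z) = 0 :=
    Measure.addHaar_affineSubspace μ _ (AffineSubspace.perpBisector_eq_top.not.2 hyz)
  refine measure_mono_null (fun x hx => ?_) bisector_null
  exact AffineSubspace.mem_perpBisector_iff_dist_eq.2 (le_antisymm (hx.1.2 z hz) (hx.2.2 y hy))

lemma sum_integral_voronoiCell_le (hK : IsClosed K) (hSY : S ⊆ Y)
    (hST : ∀ y ∈ S, voronoiCell K Y y ⊆ T) (hg : IntegrableOn g T μ) (hg0 : ∀ x, 0 ≤ g x) :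
    ∑ y ∈ S, ∫ x in voronoiCell K Y y, g x ∂μ ≤ ∫ x in T, g x ∂μ := by
  have iUnion_subset : ⋃ y : S, voronoiCell K Y y ⊆ T :=
    Set.iUnion_subset fun y => hST y y.2
  have sum_eq : ∫ x in ⋃ y : S, voronoiCell K Y y, g x ∂μ
      = ∑ y ∈ S, ∫ x in voronoiCell K Y y, g x ∂μ := by
    rw [integral_iUnion_ae (fun y : S => (isClosed_voronoiCell hK Y y).nullMeasurableSet)
      (fun y z hyz => aedisjoint_voronoiCell (hSY y.2) (hSY z.2) (Subtype.coe_ne_coe.2 hyz))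
      (hg.mono_set iUnion_subset), tsum_fintype]
    exact Finset.sum_coe_sort S fun y => ∫ x in voronoiCell K Y y, g x ∂μ
  rw [← sum_eq]
  exact setIntegral_mono_set hg (.of_forall hg0) iUnion_subset.eventuallyLE

lemma sum_integral_dist_sq_voronoiCell_le {r : ℝ} (hK : IsClosed K) (hSY : S ⊆ Y)
    (hST : ∀ y ∈ S, voronoiCell K Y y ⊆ T) (hμT : μ T ≠ ⊤) (hr : ∀ x ∈ T, infDist x Y ≤ r) :
    ∑ y ∈ S, ∫ x in voronoiCell K Y y, dist x y ^ 2 ∂μ ≤ r ^ 2 * μ.real T := by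
  have dist_sq_le : ∀ y ∈ S, ∀ x ∈ voronoiCell K Y y, ‖dist x y ^ 2‖ ≤ r ^ 2 := by
    intro y hy x hx
    rw [Real.norm_of_nonneg (sq_nonneg _), dist_eq_infDist_of_mem_voronoiCell (hSY hy) hx]
    exact pow_le_pow_left₀ infDist_nonneg (hr x (hST y hy hx)) 2
  calc ∑ y ∈ S, ∫ x in voronoiCell K Y y, dist x y ^ 2 ∂μ
      ≤ ∑ y ∈ S, ∫ _ in voronoiCell K Y y, r ^ 2 ∂μ := by
        refine Finset.sum_le_sum fun y hy => ?_
        rw [setIntegral_const, smul_eq_mul, mul_comm]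
        exact (Real.le_norm_self _).trans <| norm_setIntegral_le_of_norm_le_const
          (measure_lt_top_of_subset (hST y hy) hμT) (dist_sq_le y hy)
    _ ≤ ∫ _ in T, r ^ 2 ∂μ :=
        sum_integral_voronoiCell_le hK hSY hST (integrableOn_const hμT) fun _ => sq_nonneg r
    _ = r ^ 2 * μ.real T := by rw [setIntegral_const, smul_eq_mul, mul_comm]

end VoronoiMeasure

section Partition

variable {E : Type*} [PseudoMetricSpace E] {K : Set E} {N : ℕ} {r : ℝ}

/-- `K` splits into `N` (possibly empty) classes of diameter at most `r`. The classes are encoded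
by a labelling of the ambient space, of which only the values on `K` matter. -/
def HasPartition (K : Set E) (N : ℕ) (r : ℝ) : Prop :=
  ∃ label : E → Fin N, ∀ x ∈ K, ∀ y ∈ K, label x = label y → dist x y ≤ r

lemma HasPartition.exists_finset_net (h : HasPartition K N r) :
    ∃ G : Finset E, (G : Set E) ⊆ K ∧ G.card ≤ N ∧ ∀ x ∈ K, ∃ g ∈ G, dist x g ≤ r := by
  obtain ⟨label, hlabel⟩ := h
  obtain ⟨G, hGK, hG⟩ := Set.exists_subset_bijOn K label
  lift G to Finset E using .of_injOn hG.mapsTo hG.injOn (Set.toFinite _)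
  refine ⟨G, hGK, ?_, fun x hx => ?_⟩
  · simpa using Finset.card_le_card_of_injOn (t := Finset.univ) label
      (fun _ _ => Finset.mem_coe.2 (Finset.mem_univ _)) hG.injOn
  · obtain ⟨g, hgG, hgx⟩ := hG.surjOn (Set.mem_image_of_mem label hx)
    exact ⟨g, hgG, hlabel x hx g (hGK hgG) hgx.symm⟩

end Partition

section Energy

variable {E : Type*} [MetricSpace E] [MeasurableSpace E] {μ : Measure E} {K B : Set E}
  {Y : Finset E} {N n : ℕ} {r : ℝ} {y z p : E}

/-- The mean-square cost of quantizing `μ` restricted to `K` by the points of `Y`. -/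
def quantizationEnergy (μ : Measure E) (K : Set E) (Y : Finset E) : ℝ :=
  ∫ x in K, infDist x Y ^ 2 ∂μ

/-- `Y` minimizes the quantization energy among the `n`-point subsets of `K`. -/
def IsOptimalQuantizer (μ : Measure E) (K : Set E) (n : ℕ) (Y : Finset E) : Prop :=
  (Y : Set E) ⊆ K ∧ Y.card = n ∧
    ∀ Z : Finset E, (Z : Set E) ⊆ K → Z.card = n →
      quantizationEnergy μ K Y ≤ quantizationEnergy μ K Z

lemma IsOptimalQuantizer.infDist_le_diam (hY : IsOptimalQuantizer μ K n Y)
    (hK : Bornology.IsBounded K) (hp : p ∈ K) : infDist p Y ≤ diam K := by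
  obtain hempty | ⟨y, hy⟩ := (Y : Set E).eq_empty_or_nonempty
  · rw [hempty, infDist_empty]
    exact diam_nonneg
  · exact (infDist_le_dist_of_mem hy).trans (dist_le_diam_of_mem hK hp (hY.1 hy))

variable [IsFiniteMeasureOnCompacts μ]

lemma quantizationEnergy_le_of_forall_infDist_le (hK : IsCompact K)
    (hr : ∀ x ∈ K, infDist x Y ≤ r) : quantizationEnergy μ K Y ≤ r ^ 2 * μ.real K := by
  refine (Real.le_norm_self _).trans <|
    norm_setIntegral_le_of_norm_le_const hK.measure_lt_top fun x hx => ?_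
  rw [Real.norm_of_nonneg (sq_nonneg _)]
  exact pow_le_pow_left₀ infDist_nonneg (hr x hx) 2

lemma IsOptimalQuantizer.quantizationEnergy_le (hY : IsOptimalQuantizer μ K n Y) (hK : IsCompact K)
    (hKinf : K.Infinite) (hpart : HasPartition K N r) (hN : N ≤ n) :
    quantizationEnergy μ K Y ≤ r ^ 2 * μ.real K := by
  obtain ⟨G, hGK, hGN, hG⟩ := hpart.exists_finset_net
  obtain ⟨Z, hGZ, hZK, hZn⟩ := exists_finset_superset_card_eq hKinf hGK (hGN.trans hN)
  refine (hY.2.2 Z hZK hZn).trans (quantizationEnergy_le_of_forall_infDist_le hK fun x hx => ?_)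
  obtain ⟨g, hgG, hxg⟩ := hG x hx
  exact (infDist_le_dist_of_mem (Finset.mem_coe.2 (hGZ hgG))).trans hxg

variable [OpensMeasurableSpace E]

lemma integrableOn_infDist_sq (hK : IsCompact K) (Y : Finset E) :
    IntegrableOn (fun x => infDist x (Y : Set E) ^ 2) K μ :=
  ((continuous_infDist_pt _).pow 2).continuousOn.integrableOn_compact hK

open scoped Classical in
lemma quantizationEnergy_insert_erase_add_le (hK : IsCompact K) (hy : y ∈ Y) (hz : z ∈ Y)
    (hzy : z ≠ y) (hyz : dist y z ≤ r) (hBm : MeasurableSet B) (hBK : B ⊆ K)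
    (hB : B ⊆ closedBall p (infDist p Y / 4)) :
    quantizationEnergy μ K (insert p (Y.erase y)) + infDist p Y ^ 2 / 2 * μ.real B ≤
      quantizationEnergy μ K Y +
        ∫ x in voronoiCell K Y y, (infDist x Y ^ 2 + 2 * r ^ 2) ∂μ := by
  have hVm : MeasurableSet (voronoiCell K Y y) :=
    (isClosed_voronoiCell hK.isClosed Y y).measurableSet
  have int_const (c : ℝ) : IntegrableOn (fun _ => c) K μ := integrableOn_const hK.measure_ne_top
  have int_gain := (int_const (infDist p Y ^ 2 / 2)).indicator hBm
  have int_loss := ((integrableOn_infDist_sq hK Y).add (int_const (2 * r ^ 2))).indicator hVm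
  have := setIntegral_mono_on ((integrableOn_infDist_sq hK (insert p (Y.erase y))).add int_gain)
    ((integrableOn_infDist_sq hK Y).add int_loss) hK.measurableSet
    fun x hx => infDist_insert_erase_sq_add_indicator_le hy hz hzy hyz hB hx
  simp only [Pi.add_apply] at this
  rwa [integral_add (integrableOn_infDist_sq hK _) int_gain,
    integral_add (integrableOn_infDist_sq hK Y) int_loss, setIntegral_indicator hBm,
    setIntegral_indicator hVm, Set.inter_eq_self_of_subset_right hBK,
    Set.inter_eq_self_of_subset_right (voronoiCell_subset K Y y), setIntegral_const, smul_eq_mul,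
    mul_comm (μ.real B)] at this

lemma IsOptimalQuantizer.infDist_sq_mul_le (hY : IsOptimalQuantizer μ K n Y) (hK : IsCompact K)
    (hy : y ∈ Y) (hz : z ∈ Y) (hzy : z ≠ y) (hyz : dist y z ≤ r) (hp : p ∈ K)
    (hBm : MeasurableSet B) (hBK : B ⊆ K) (hB : B ⊆ closedBall p (infDist p Y / 4)) :
    infDist p Y ^ 2 / 2 * μ.real B ≤
      ∫ x in voronoiCell K Y y, (infDist x Y ^ 2 + 2 * r ^ 2) ∂μ := by
  classical
  by_cases hpY : p ∈ Y
  · rw [infDist_zero_of_mem hpY, zero_pow two_ne_zero, zero_div, zero_mul]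
    positivity
  have swap_subset : ↑(insert p (Y.erase y)) ⊆ K := by
    rw [Finset.coe_insert, Finset.coe_erase]
    exact Set.insert_subset hp (Set.sdiff_subset.trans hY.1)
  have swap_card : (insert p (Y.erase y)).card = n := by
    rw [Finset.card_insert_of_notMem (fun h => hpY (Finset.mem_of_mem_erase h)),
      Finset.card_erase_add_one hy, hY.2.1]
  linarith [hY.2.2 _ swap_subset swap_card,
    quantizationEnergy_insert_erase_add_le (μ := μ) hK hy hz hzy hyz hBm hBK hB]

end Energy

section ConvexRegion

open AffineMap Module in
lemma exists_subset_closedBall_measureReal_eq {E : Type*} [NormedAddCommGroup E] [NormedSpace ℝ E]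
    [FiniteDimensional ℝ E] [MeasurableSpace E] [BorelSpace E] {μ : Measure E}
    [μ.IsAddHaarMeasure] {K : Set E} (hK : IsCompact K) (hconv : Convex ℝ K) {p : E} (hp : p ∈ K)
    {t : ℝ} (ht0 : 0 ≤ t) (ht1 : t ≤ 1) :
    ∃ B ⊆ K, MeasurableSet B ∧ B ⊆ closedBall p (t * diam K) ∧
      μ.real B = t ^ finrank ℝ E * μ.real K := by
  refine ⟨homothety p t '' K, ?_, (hK.image (homothety_continuous p t)).measurableSet, ?_, ?_⟩
  · rintro _ ⟨x, hx, rfl⟩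
    rw [homothety_eq_lineMap]
    exact hconv.lineMap_mem hp hx ⟨ht0, ht1⟩
  · rintro _ ⟨x, hx, rfl⟩
    rw [mem_closedBall, dist_homothety_center, Real.norm_of_nonneg ht0]
    gcongr
    exact dist_le_diam_of_mem hK.isBounded hp hx
  · rw [measureReal_def, Measure.addHaar_image_homothety, ENNReal.toReal_mul,
      ENNReal.toReal_ofReal (abs_nonneg _), abs_of_nonneg (pow_nonneg ht0 _), measureReal_def]

variable {E : Type*} [NormedAddCommGroup E] [InnerProductSpace ℝ E] [FiniteDimensional ℝ E]
  [MeasurableSpace E] [BorelSpace E] {μ : Measure E} [μ.IsAddHaarMeasure]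
  {K B : Set E} {Y : Finset E} {N n : ℕ} {r : ℝ} {p : E}

namespace IsOptimalQuantizer

lemma sum_integral_infDist_sq_add_le (hY : IsOptimalQuantizer μ K n Y) (hK : IsCompact K)
    (hKinf : K.Infinite) (hpart : HasPartition K N r) (hN : N ≤ n) :
    ∑ y ∈ Y, ∫ x in voronoiCell K Y y, (infDist x Y ^ 2 + 2 * r ^ 2) ∂μ ≤
      3 * r ^ 2 * μ.real K := by
  have int_const : IntegrableOn (fun _ => 2 * r ^ 2) K μ := integrableOn_const hK.measure_ne_top
  calc ∑ y ∈ Y, ∫ x in voronoiCell K Y y, (infDist x Y ^ 2 + 2 * r ^ 2) ∂μ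
      ≤ ∫ x in K, (infDist x Y ^ 2 + 2 * r ^ 2) ∂μ :=
        sum_integral_voronoiCell_le hK.isClosed subset_rfl
          (fun y _ => voronoiCell_subset K Y y) ((integrableOn_infDist_sq hK Y).add int_const)
          fun x => by positivity
    _ = quantizationEnergy μ K Y + 2 * r ^ 2 * μ.real K := by
        rw [integral_add (integrableOn_infDist_sq hK Y) int_const, setIntegral_const, smul_eq_mul,
          mul_comm (μ.real K), quantizationEnergy]
    _ ≤ 3 * r ^ 2 * μ.real K := by
        linarith [hY.quantizationEnergy_le hK hKinf hpart hN]

lemma card_mul_infDist_sq_mul_le (hY : IsOptimalQuantizer μ K n Y) (hK : IsCompact K)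
    (hKinf : K.Infinite) (hpart : HasPartition K N r) (hN : 2 * N ≤ n) (hp : p ∈ K)
    (hBm : MeasurableSet B) (hBK : B ⊆ K) (hB : B ⊆ closedBall p (infDist p Y / 4)) :
    N * (infDist p Y ^ 2 / 2 * μ.real B) ≤ 3 * r ^ 2 * μ.real K := by
  have sum_le := hY.sum_integral_infDist_sq_add_le hK hKinf hpart (by omega)
  obtain ⟨label, hlabel⟩ := hpart
  obtain ⟨y, hy, z, hz, hzy, hyz, cell_le⟩ := exists_ne_map_eq_and_mul_le (label p).pos
    (hY.2.1 ▸ hN) label (fun y _ => by positivity) sum_le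
  refine le_trans ?_ cell_le
  gcongr
  exact hY.infDist_sq_mul_le hK hy hz hzy (hlabel y (hY.1 hy) z (hY.1 hz) hyz) hp hBm hBK hB

open Module in
theorem card_mul_infDist_pow_le [Nontrivial E] (hY : IsOptimalQuantizer μ K n Y)
    (hK : IsCompact K) (hconv : Convex ℝ K) (hμK : μ K ≠ 0) (hpart : HasPartition K N r)
    (hN : 2 * N ≤ n) (hp : p ∈ K) :
    N * infDist p Y ^ (finrank ℝ E + 2) ≤ 6 * r ^ 2 * (4 * diam K) ^ finrank ℝ E := by
  have hKinf : K.Infinite := fun hfin => hμK (hfin.measure_zero μ)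
  obtain hR | hR : infDist p Y = 0 ∨ 0 < infDist p Y := infDist_nonneg.eq_or_lt'
  · rw [hR, zero_pow (by omega), mul_zero]
    positivity
  have infDist_le_diam := hY.infDist_le_diam hK.isBounded hp
  have hD : 0 < diam K := hR.trans_le infDist_le_diam
  set t : ℝ := infDist p Y / (4 * diam K) with ht
  obtain ⟨B, hBK, hBm, hB, hμB⟩ := exists_subset_closedBall_measureReal_eq (μ := μ) hK hconv hp
    (t := t) (by positivity) ((div_le_one (by positivity)).2 (by linarith))
  have radius_eq : t * diam K = infDist p Y / 4 := by rw [ht]; field_simp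
  have cost_le := hY.card_mul_infDist_sq_mul_le hK hKinf hpart hN hp hBm hBK (radius_eq ▸ hB)
  have hμK' : 0 < μ.real K := ENNReal.toReal_pos hμK hK.measure_ne_top
  rw [hμB, ← mul_assoc, ← mul_assoc, mul_le_mul_iff_left₀ hμK'] at cost_le
  calc N * infDist p Y ^ (finrank ℝ E + 2)
      = 2 * (N * (infDist p Y ^ 2 / 2) * t ^ finrank ℝ E) * (4 * diam K) ^ finrank ℝ E := by
        rw [ht, div_pow]; field_simp; ring
    _ ≤ 2 * (3 * r ^ 2) * (4 * diam K) ^ finrank ℝ E := by gcongr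
    _ = _ := by ring

end IsOptimalQuantizer

end ConvexRegion

section Box

variable {ι : Type*} {lo hi : ι → ℝ}

/-- The closed axis-parallel box `∏ᵢ [loᵢ, hiᵢ]`, as a subset of Euclidean space. -/
def box (lo hi : ι → ℝ) : Set (EuclideanSpace ℝ ι) := {x | ∀ i, x i ∈ Set.Icc (lo i) (hi i)}

lemma box_eq_preimage (lo hi : ι → ℝ) :
    box lo hi = (WithLp.ofLp : EuclideanSpace ℝ ι → ι → ℝ) ⁻¹' Set.Icc lo hi := by
  ext x
  exact forall_and

lemma isCompact_box (lo hi : ι → ℝ) : IsCompact (box lo hi) := by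
  rw [box_eq_preimage]
  exact (PiLp.homeomorph 2 _).isCompact_preimage.2 isCompact_Icc

lemma convex_box (lo hi : ι → ℝ) : Convex ℝ (box lo hi) := by
  rw [box_eq_preimage]
  exact (convex_Icc lo hi).linear_preimage (WithLp.linearEquiv 2 ℝ (ι → ℝ)).toLinearMap

lemma exists_eq_of_mem_frontier_box [Finite ι] {p : EuclideanSpace ℝ ι}
    (hp : p ∈ frontier (box lo hi)) : ∃ i, p i = lo i ∨ p i = hi i := by
  rw [(isCompact_box lo hi).isClosed.frontier_eq] at hp
  by_contra! hne
  have isOpen_openBox : IsOpen {x : EuclideanSpace ℝ ι | ∀ i, x i ∈ Set.Ioo (lo i) (hi i)} := by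
    rw [Set.ofPred_forall]
    exact isOpen_iInter_of_finite fun i => isOpen_Ioo.preimage (by fun_prop)
  refine hp.2 (mem_interior.2 ⟨_, fun x hx i => ?_, isOpen_openBox, fun i => ?_⟩)
  · exact Set.Ioo_subset_Icc_self (hx i)
  · exact ⟨(hp.1 i).1.lt_of_ne' (hne i).1, (hp.1 i).2.lt_of_ne (hne i).2⟩

lemma volume_box [Fintype ι] (lo hi : ι → ℝ) :
    volume (box lo hi) = ∏ i, ENNReal.ofReal (hi i - lo i) := by
  rw [box_eq_preimage, (PiLp.volume_preserving_ofLp ι).measure_preimage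
    measurableSet_Icc.nullMeasurableSet, Real.volume_Icc_pi]

end Box

section UnitCube

variable {ι : Type*} [Fintype ι]

lemma dist_le_sqrt_card_mul {x y : EuclideanSpace ℝ ι} {t : ℝ} (ht : 0 ≤ t)
    (h : ∀ i, dist (x i) (y i) ≤ t) : dist x y ≤ √(Fintype.card ι) * t := by
  rw [EuclideanSpace.dist_eq]
  refine Real.sqrt_le_iff.2 ⟨by positivity, ?_⟩
  calc ∑ i, dist (x i) (y i) ^ 2 ≤ ∑ _i : ι, t ^ 2 :=
        Finset.sum_le_sum fun i _ => pow_le_pow_left₀ dist_nonneg (h i) 2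
    _ = (√(Fintype.card ι) * t) ^ 2 := by
        rw [mul_pow, Real.sq_sqrt (Nat.cast_nonneg _), Finset.sum_const, nsmul_eq_mul,
          Finset.card_univ]

lemma volume_box_zero_one : volume (box (0 : ι → ℝ) 1) = 1 := by
  simp [volume_box]

lemma diam_box_zero_one_le : diam (box (0 : ι → ℝ) 1) ≤ √(Fintype.card ι) := by
  rw [← mul_one √(Fintype.card ι)]
  refine diam_le_of_forall_dist_le (by positivity) fun x hx y hy => ?_
  exact dist_le_sqrt_card_mul zero_le_one fun i =>
    (Real.dist_le_of_mem_Icc (hx i) (hy i)).trans_eq (sub_zero 1)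

lemma exists_fin_mem_Icc_div {m : ℕ} (hm : 0 < m) {t : ℝ} (ht : t ∈ Set.Icc (0 : ℝ) 1) :
    ∃ k : Fin m, t ∈ Set.Icc ((k : ℝ) / m) ((k + 1) / m) := by
  have hm' : (0 : ℝ) < m := Nat.cast_pos.2 hm
  have ceil_le : ⌈t * m⌉₊ ≤ m := Nat.ceil_le.2 (mul_le_of_le_one_left hm'.le ht.2)
  refine ⟨⟨⌈t * m⌉₊ - 1, by omega⟩, (div_le_iff₀ hm').2 ?_, (le_div_iff₀ hm').2 ?_⟩
  · obtain h | h : ⌈t * m⌉₊ - 1 = 0 ∨ ⌈t * m⌉₊ - 1 < ⌈t * m⌉₊ := by omega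
    · simpa [h] using mul_nonneg ht.1 hm'.le
    · exact (Nat.lt_ceil.1 h).le
  · exact (Nat.le_ceil _).trans (by exact_mod_cast (by omega : ⌈t * m⌉₊ ≤ ⌈t * m⌉₊ - 1 + 1))

lemma hasPartition_box_zero_one {m : ℕ} (hm : 0 < m) :
    HasPartition (box (0 : ι → ℝ) 1) (m ^ Fintype.card ι) (√(Fintype.card ι) / m) := by
  classical
  have : NeZero m := ⟨hm.ne'⟩
  choose! cell mem_cell using fun t (ht : t ∈ Set.Icc (0 : ℝ) 1) => exists_fin_mem_Icc_div hm ht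
  let e : (ι → Fin m) ≃ Fin (m ^ Fintype.card ι) := Fintype.equivFinOfCardEq (by simp)
  refine ⟨fun x => e fun i => cell (x i), fun x hx y hy hxy => ?_⟩
  have same_cell (i : ι) : cell (x i) = cell (y i) := congrFun (e.injective hxy) i
  rw [← mul_one_div]
  refine dist_le_sqrt_card_mul (by positivity) fun i => ?_
  refine (Real.dist_le_of_mem_Icc (mem_cell _ (hx i)) (same_cell i ▸ mem_cell _ (hy i))).trans_eq ?_
  rw [← sub_div, add_sub_cancel_left]

theorem IsOptimalQuantizer.infDist_mul_pow_le [Nonempty ι] {n m : ℕ}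
    {Y : Finset (EuclideanSpace ℝ ι)} (hY : IsOptimalQuantizer volume (box 0 1) n Y) (hm : 0 < m)
    (hmn : 2 * m ^ Fintype.card ι ≤ n) {p : EuclideanSpace ℝ ι} (hp : p ∈ box 0 1) :
    (infDist p Y * m) ^ (Fintype.card ι + 2) ≤
      6 * Fintype.card ι * (4 * √(Fintype.card ι)) ^ Fintype.card ι := by
  set d := Fintype.card ι with hd
  have key := hY.card_mul_infDist_pow_le (isCompact_box 0 1) (convex_box 0 1)
    (by simp [volume_box_zero_one]) (hasPartition_box_zero_one hm) hmn hp
  rw [finrank_euclideanSpace, ← hd] at key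
  calc (infDist p Y * m) ^ (d + 2)
      = (m ^ d : ℕ) * infDist p Y ^ (d + 2) * m ^ 2 := by push_cast; ring
    _ ≤ 6 * (√d / m) ^ 2 * (4 * diam (box (0 : ι → ℝ) 1)) ^ d * m ^ 2 := by gcongr
    _ ≤ 6 * (√d / m) ^ 2 * (4 * √d) ^ d * m ^ 2 := by
        gcongr
        exact diam_box_zero_one_le
    _ = 6 * d * (4 * √d) ^ d := by
        rw [div_pow, Real.sq_sqrt d.cast_nonneg]; field_simp

theorem IsOptimalQuantizer.exists_covering_radius [Nonempty ι] {n : ℕ}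
    {Y : Finset (EuclideanSpace ℝ ι)} (hY : IsOptimalQuantizer volume (box 0 1) n Y) (hn : 0 < n)
    {A : ℝ} (hA0 : 0 ≤ A)
    (hA : 6 * Fintype.card ι * (4 * √(Fintype.card ι)) ^ Fintype.card ι ≤
      A ^ (Fintype.card ι + 2)) :
    ∃ r, 0 ≤ r ∧ n * r ^ Fintype.card ι ≤ 2 * (2 * A) ^ Fintype.card ι ∧
      ∀ x ∈ box (0 : ι → ℝ) 1, infDist x Y ≤ r := by
  set d := Fintype.card ι
  obtain rfl | hn2 : n = 1 ∨ 2 ≤ n := by omega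
  · refine ⟨A, hA0, ?_, fun x hx => ?_⟩
    · rw [Nat.cast_one, one_mul, mul_pow, ← mul_assoc]
      have : (1 : ℝ) ≤ 2 ^ d := one_le_pow₀ one_le_two
      exact le_mul_of_one_le_left (by positivity) (by linarith)
    · refine le_of_pow_le_pow_left₀ (n := d + 2) (by omega) hA0 (le_trans ?_ hA)
      calc infDist x Y ^ (d + 2) ≤ √d ^ (d + 2) := by
            gcongr
            · exact infDist_nonneg
            · exact (hY.infDist_le_diam (isCompact_box 0 1).isBounded hx).trans diam_box_zero_one_le
        _ = d * √d ^ d := by rw [pow_add, Real.sq_sqrt d.cast_nonneg, mul_comm]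
        _ ≤ 6 * d * (4 * √d) ^ d := by
          gcongr <;> linarith [Real.sqrt_nonneg d, (Nat.cast_nonneg d : (0 : ℝ) ≤ d)]
  · obtain ⟨m, hm, hmn, hnm⟩ := exists_two_mul_pow_le_and_le (d := d) Fintype.card_ne_zero hn2
    have hm' : (0 : ℝ) < m := Nat.cast_pos.2 hm
    refine ⟨A / m, by positivity, ?_, fun x hx => (le_div_iff₀ hm').2 ?_⟩
    · calc n * (A / m) ^ d ≤ (2 * (2 * m) ^ d : ℝ) * (A / m) ^ d := by
            gcongr
            exact_mod_cast hnm
        _ = 2 * (2 * A) ^ d := by rw [mul_assoc, ← mul_pow]; congr 2; field_simp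
    · exact le_of_pow_le_pow_left₀ (by omega) hA0 ((hY.infDist_mul_pow_le hm hmn hx).trans hA)

end UnitCube

section BoxBoundary

variable {ι : Type*} [Fintype ι] {lo hi : ι → ℝ} {δ r : ℝ}

/-- The points lying within `δ` of one of the hyperplanes that carry the facets of `box lo hi`. -/
def facetNeighborhood (lo hi : ι → ℝ) (δ : ℝ) : Set (EuclideanSpace ℝ ι) :=
  {x | ∃ i, dist (x i) (lo i) ≤ δ ∨ dist (x i) (hi i) ≤ δ}

lemma volume_real_slab_le (hδ : 0 ≤ δ) (i : ι) (t : ℝ) :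
    volume.real {x ∈ box (0 : ι → ℝ) 1 | dist (x i) t ≤ δ} ≤ 2 * δ := by
  classical
  have slab_subset : {x ∈ box (0 : ι → ℝ) 1 | dist (x i) t ≤ δ} ⊆
      box (Function.update 0 i (t - δ)) (Function.update 1 i (t + δ)) := by
    rintro x ⟨hx, hxt⟩ j
    obtain rfl | hj := eq_or_ne j i
    · rw [Function.update_self, Function.update_self, ← Real.closedBall_eq_Icc]
      exact hxt
    · rw [Function.update_of_ne hj, Function.update_of_ne hj]
      exact hx j
  refine (measureReal_mono slab_subset (isCompact_box _ _).measure_ne_top).trans_eq ?_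
  rw [measureReal_def, volume_box, Finset.prod_eq_single i]
  · rw [Function.update_self, Function.update_self, ENNReal.toReal_ofReal (by linarith)]
    ring
  · intro j _ hj
    simp [Function.update_of_ne hj]
  · exact fun h => absurd (Finset.mem_univ i) h

lemma volume_real_box_inter_facetNeighborhood_le (hδ : 0 ≤ δ) :
    volume.real (box 0 1 ∩ facetNeighborhood lo hi δ) ≤ 4 * Fintype.card ι * δ := by
  have eq_iUnion : box 0 1 ∩ facetNeighborhood lo hi δ =
      ⋃ i, ({x ∈ box 0 1 | dist (x i) (lo i) ≤ δ} ∪ {x ∈ box 0 1 | dist (x i) (hi i) ≤ δ}) := by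
    ext x
    simp [facetNeighborhood, ← and_or_left]
  calc volume.real (box 0 1 ∩ facetNeighborhood lo hi δ)
      ≤ ∑ i : ι, volume.real ({x ∈ box (0 : ι → ℝ) 1 | dist (x i) (lo i) ≤ δ} ∪
          {x ∈ box (0 : ι → ℝ) 1 | dist (x i) (hi i) ≤ δ}) := by
        rw [eq_iUnion]
        exact measureReal_iUnion_fintype_le _
    _ ≤ ∑ _i : ι, (2 * δ + 2 * δ) := Finset.sum_le_sum fun i _ =>
        (measureReal_union_le _ _).trans <|
          add_le_add (volume_real_slab_le hδ i _) (volume_real_slab_le hδ i _)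
    _ = 4 * Fintype.card ι * δ := by
        rw [Finset.sum_const, nsmul_eq_mul, Finset.card_univ]
        ring

lemma voronoiCell_subset_facetNeighborhood {K : Set (EuclideanSpace ℝ ι)}
    {Y : Finset (EuclideanSpace ℝ ι)} {y : EuclideanSpace ℝ ι} (hy : y ∈ Y)
    (hr : ∀ x ∈ K, infDist x Y ≤ r)
    (hmeet : (voronoiCell K Y y ∩ frontier (box lo hi)).Nonempty) :
    voronoiCell K Y y ⊆ facetNeighborhood lo hi (2 * r) := by
  intro x hx
  obtain ⟨p, hpV, hp⟩ := hmeet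
  have dist_site_le {q : EuclideanSpace ℝ ι} (hq : q ∈ voronoiCell K Y y) : dist q y ≤ r :=
    (dist_eq_infDist_of_mem_voronoiCell hy hq).trans_le (hr q hq.1)
  have dist_coord_le (i : ι) : dist (x i) (p i) ≤ 2 * r := calc
    dist (x i) (p i) ≤ dist x p := PiLp.dist_apply_le x p i
    _ ≤ dist x y + dist p y := dist_triangle_right x p y
    _ ≤ 2 * r := by linarith [dist_site_le hx, dist_site_le hpV]
  obtain ⟨i, hi | hi⟩ := exists_eq_of_mem_frontier_box hp
  · exact ⟨i, .inl (hi ▸ dist_coord_le i)⟩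
  · exact ⟨i, .inr (hi ▸ dist_coord_le i)⟩

theorem sum_integral_voronoiCell_meeting_frontier_le {Y S : Finset (EuclideanSpace ℝ ι)}
    (hSY : S ⊆ Y) (hr0 : 0 ≤ r) (hr : ∀ x ∈ box (0 : ι → ℝ) 1, infDist x Y ≤ r)
    (hS : ∀ y ∈ S, (voronoiCell (box 0 1) Y y ∩ frontier (box lo hi)).Nonempty) :
    ∑ y ∈ S, ∫ x in voronoiCell (box 0 1) Y y, dist x y ^ 2 ≤ 8 * Fintype.card ι * r ^ 3 := by
  have cube_compact : IsCompact (box (0 : ι → ℝ) 1) := isCompact_box 0 1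
  calc ∑ y ∈ S, ∫ x in voronoiCell (box 0 1) Y y, dist x y ^ 2
      ≤ r ^ 2 * volume.real (box 0 1 ∩ facetNeighborhood lo hi (2 * r)) :=
        sum_integral_dist_sq_voronoiCell_le cube_compact.isClosed hSY
          (fun y hy => Set.subset_inter (voronoiCell_subset _ _ _)
            (voronoiCell_subset_facetNeighborhood (hSY hy) hr (hS y hy)))
          (measure_ne_top_of_subset Set.inter_subset_left cube_compact.measure_ne_top)
          fun x hx => hr x hx.1
    _ ≤ r ^ 2 * (4 * Fintype.card ι * (2 * r)) := by
        gcongr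
        exact volume_real_box_inter_facetNeighborhood_le (by positivity)
    _ = 8 * Fintype.card ι * r ^ 3 := by ring

end BoxBoundary

section Constants

lemma one_le_omega3 : 1 ≤ omega3 := by
  unfold omega3
  linarith [Real.pi_gt_three]

lemma omega3_le : omega3 ≤ 16 := by
  unfold omega3
  linarith [Real.pi_lt_four]

lemma Gamma1_pos : 0 < Gamma1 := by
  unfold Gamma1
  positivity

lemma Gamma1_le_one : Gamma1 ≤ 1 := by
  have : (2 / 5 : ℝ) ^ ((2 : ℝ) / 3) ≤ 1 :=
    Real.rpow_le_one (by norm_num) (by norm_num) (by norm_num)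
  unfold Gamma1
  linarith

lemma Gamma3_pos : 0 < Gamma3 :=
  mul_pos (Real.rpow_pos_of_pos (one_pos.trans_le one_le_omega3) _)
    (Real.rpow_pos_of_pos Gamma1_pos _)

lemma Gamma3_le_one : Gamma3 ≤ 1 :=
  mul_le_one₀ (Real.rpow_le_one_of_one_le_of_nonpos one_le_omega3 (by norm_num))
    (Real.rpow_nonneg Gamma1_pos.le _)
    (Real.rpow_le_one Gamma1_pos.le Gamma1_le_one (by norm_num))

lemma sqrt_sub_one_mem_Ioc :
    √(1 + (2 ^ 4 * 3 ^ 3 : ℝ) / (5 ^ 2 * 10 ^ 3)) - 1 ∈ Set.Ioc (0 : ℝ) (1 / 100) :=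
  ⟨sub_pos.2 (Real.lt_sqrt_of_sq_lt (by norm_num)),
    sub_le_iff_le_add.2 (Real.sqrt_le_iff.2 ⟨by norm_num, by norm_num⟩)⟩

lemma Gamma5_pos : 0 < Gamma5 :=
  mul_pos (mul_pos (by norm_num) sqrt_sub_one_mem_Ioc.1) Gamma3_pos

lemma Gamma5_le : Gamma5 ≤ 1 / 400 := calc
  Gamma5 ≤ 1 / 4 * (1 / 100) * 1 := by
    unfold Gamma5
    gcongr
    · exact Gamma3_pos.le
    · exact sqrt_sub_one_mem_Ioc.2
    · exact Gamma3_le_one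
  _ = 1 / 400 := by norm_num

lemma one_le_Gamma4 : 1 ≤ Gamma4 := by
  have omega3_pos : 0 < omega3 := one_pos.trans_le one_le_omega3
  have pi_rpow_le : Real.pi ^ ((1 : ℝ) / 4) ≤ 2 * (12 : ℝ) ^ ((1 : ℝ) / 4) := calc
    Real.pi ^ ((1 : ℝ) / 4) ≤ (12 : ℝ) ^ ((1 : ℝ) / 4) := by
      gcongr
      linarith [Real.pi_lt_four]
    _ ≤ 2 * (12 : ℝ) ^ ((1 : ℝ) / 4) := le_mul_of_one_le_left (by positivity) one_le_two
  have omega3_rpow_le : omega3 ^ ((1 : ℝ) / 12) ≤ (16 : ℝ) ^ ((1 : ℝ) / 3) := calc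
    omega3 ^ ((1 : ℝ) / 12) ≤ (16 : ℝ) ^ ((1 : ℝ) / 12) := by
      gcongr
      exact omega3_le
    _ ≤ (16 : ℝ) ^ ((1 : ℝ) / 3) :=
      Real.rpow_le_rpow_of_exponent_le (by norm_num) (by norm_num)
  refine one_le_mul_of_one_le_of_one_le (one_le_mul_of_one_le_of_one_le ?_ ?_) ?_
  · rw [one_le_div (by positivity)]
    gcongr
  · exact Real.one_le_rpow_of_pos_of_le_one_of_nonpos sqrt_sub_one_mem_Ioc.1
      (sqrt_sub_one_mem_Ioc.2.trans (by norm_num)) (by norm_num)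
  · exact Real.one_le_rpow (by norm_num) (by norm_num)

lemma le_three_mul_Gamma4_pow_div : 48000000 ≤ 3 * Gamma4 ^ 6 / (4 * Gamma5 ^ 3) := calc
  (48000000 : ℝ) = 3 * 1 ^ 6 / (4 * (1 / 400) ^ 3) := by norm_num
  _ ≤ 3 * Gamma4 ^ 6 / (4 * Gamma5 ^ 3) := by
    have := Gamma5_pos
    gcongr
    · exact one_le_Gamma4
    · exact Gamma5_le

end Constants

lemma isMinimizer_iff_isOptimalQuantizer {n : ℕ} {Y : Finset E3} :
    IsMinimizer n Y ↔ IsOptimalQuantizer volume (box 0 1) n Y := Iff.rfl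

lemma IsMinimizer.exists_covering_radius {n : ℕ} (hn : 0 < n) {Y : Finset E3}
    (hY : IsMinimizer n Y) :
    ∃ r : ℝ, 0 ≤ r ∧ n * r ^ 3 ≤ 3456 ∧ ∀ x ∈ box (0 : Fin 3 → ℝ) 1, infDist x Y ≤ r := by
  have sqrt_three_le : √3 ≤ 2 := Real.sqrt_le_iff.2 ⟨by norm_num, by norm_num⟩
  have const_le : (6 * (3 : ℕ) * (4 * √(3 : ℕ)) ^ 3 : ℝ) ≤ 6 ^ (3 + 2) := calc
    (6 * (3 : ℕ) * (4 * √(3 : ℕ)) ^ 3 : ℝ) = 1152 * (√3 ^ 2 * √3) := by push_cast; ring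
    _ = 1152 * (3 * √3) := by rw [Real.sq_sqrt (by norm_num)]
    _ ≤ 1152 * (3 * 2) := by gcongr
    _ ≤ 6 ^ (3 + 2) := by norm_num
  obtain ⟨r, hr0, hrn, hr⟩ := (isMinimizer_iff_isOptimalQuantizer.1 hY).exists_covering_radius
    hn (by norm_num) const_le
  exact ⟨r, hr0, hrn.trans_eq (by norm_num), hr⟩

open scoped Classical in
theorem stmt_13_general (lo hi : Fin 3 → ℝ) {n : ℕ} (hn : 0 < n) {Y : Finset E3}
    (hY : IsMinimizer n Y) :
    (∑ y ∈ Y.filter (fun y => (vorCell Y y ∩ frontier (box lo hi)).Nonempty),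
        ∫ x in vorCell Y y, dist x y ^ 2) ≤
      (3 * Gamma4 ^ 6 / (4 * Gamma5 ^ 3)) * (n : ℝ)⁻¹ := by
  obtain ⟨r, hr0, hrn, hr⟩ := hY.exists_covering_radius hn
  have hn' : (0 : ℝ) < n := Nat.cast_pos.2 hn
  have boundary_le := sum_integral_voronoiCell_meeting_frontier_le (lo := lo) (hi := hi)
    (Y.filter_subset _) hr0 hr fun y hy => (Finset.mem_filter.1 hy).2
  refine boundary_le.trans ?_
  rw [← div_eq_mul_inv, le_div_iff₀ hn', Fintype.card_fin]
  push_cast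
  linarith [le_three_mul_Gamma4_pow_div]

open scoped Classical in
theorem stmt_13 (Ω : Set E3) (a : E3) (L : ℝ) (hL : 0 < L)
    (hΩ : Ω = {x : E3 | ∀ i, x i ∈ Set.Icc (a i) (a i + L)}) (hΩQ : Ω ⊆ Qcube) :
    ∀ᶠ n : ℕ in Filter.atTop, ∀ Y : Finset E3, IsMinimizer n Y →
      (∑ y ∈ Y.filter (fun y => (vorCell Y y ∩ frontier Ω).Nonempty),
          ∫ x in vorCell Y y, dist x y ^ 2) ≤
        (3 * Gamma4 ^ 6 / (4 * Gamma5 ^ 3)) * (n : ℝ)⁻¹ := by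
  subst hΩ
  filter_upwards [Filter.eventually_gt_atTop 0] with n hn Y hY
  exact stmt_13_general a (fun i => a i + L) hn hY
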